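/- arXiv:2509.08387 — 2 statements merged into one kernel-verified Lean document; each statement's English description precedes it below -/
import Mathlib

section
/- Let a budget profile be given (integer m ≥ 1, strictly increasing positive real privacy budgets ε_1 < ε_2 < ⋯ < ε_m, positive integer counts n_1, …, n_m, n = n_1 + ⋯ + n_m, Z = (n − n_m)(n − n_m + 1/4)) and a sensitivity I > 0. Then the OBS error satisfies errO_I ≤ min( 2I²/ε_1² , Z + 2I²/ε_m² ). (Lemma 1: the error of the Sampling Mechanism with privacy budget chosen by Optimal Budget Selection is at most min(2I²/min_j ε_j², (n − n_M)(n − n_M + 1/4) + 2I²/max_j ε_j²), where n_M is the count of the largest budget.) -/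
open Finset

/-- Sampling probability p_k(θ) = (e^{ε_k} − 1)/(e^{θ} − 1). -/
noncomputable def samplingP {m : ℕ} (ε : Fin m → ℝ) (k : Fin m) (θ : ℝ) : ℝ :=
  (Real.exp (ε k) - 1) / (Real.exp θ - 1)

/-- Sampling error err_s(θ). -/
noncomputable def errS {m : ℕ} (ε : Fin m → ℝ) (nn : Fin m → ℕ) (θ : ℝ) : ℝ :=
  (∑ k, if ε k < θ then (nn k : ℝ) * samplingP ε k θ * (1 - samplingP ε k θ) else 0)
    + (∑ k, if ε k < θ then (nn k : ℝ) * (1 - samplingP ε k θ) else 0) ^ 2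

/-- Noise error err_dp(θ) = 2I²/θ². -/
noncomputable def errDP (I θ : ℝ) : ℝ := 2 * I ^ 2 / θ ^ 2

/-- Total error err(θ) = err_s(θ) + err_dp(θ). -/
noncomputable def errTot {m : ℕ} (ε : Fin m → ℝ) (nn : Fin m → ℕ) (I θ : ℝ) : ℝ :=
  errS ε nn θ + errDP I θ

/-- OBS error: errO_I = min_{1 ≤ j ≤ m} err(ε_j). -/
noncomputable def errO {m : ℕ} (hm : 0 < m) (ε : Fin m → ℝ) (nn : Fin m → ℕ) (I : ℝ) : ℝ :=
  Finset.univ.inf' (Finset.univ_nonempty_iff.mpr (Fin.pos_iff_nonempty.mp hm))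
    (fun j => errTot ε nn I (ε j))

/-- Index of the smallest budget ε_1. -/
def firstIdx {m : ℕ} (hm : 0 < m) : Fin m := ⟨0, hm⟩

/-- Index of the largest budget ε_m. -/
def lastIdx {m : ℕ} (hm : 0 < m) : Fin m := ⟨m - 1, Nat.sub_lt hm Nat.one_pos⟩

/-- Z = (n − n_m)(n − n_m + 1/4). -/
noncomputable def Zval {m : ℕ} (hm : 0 < m) (nn : Fin m → ℕ) : ℝ :=
  ((∑ j, (nn j : ℝ)) - nn (lastIdx hm)) * ((∑ j, (nn j : ℝ)) - nn (lastIdx hm) + 1 / 4)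

/-- N-th square harmonic number H²_N = Σ_{k=1}^N 1/k². -/
noncomputable def sqHarmonic (N : ℕ) : ℝ := ∑ k ∈ Finset.Icc 1 N, 1 / (k : ℝ) ^ 2

/-- A group with budget below the threshold has sampling probability in `[0, 1]`. -/
lemma samplingP_mem_Icc {m : ℕ} {ε : Fin m → ℝ} {k : Fin m} {θ : ℝ} (hk : 0 < ε k)
    (hkθ : ε k < θ) : samplingP ε k θ ∈ Set.Icc (0 : ℝ) 1 := by
  have h1 : 1 < Real.exp (ε k) := Real.one_lt_exp_iff.mpr hk
  have h2 : Real.exp (ε k) < Real.exp θ := Real.exp_lt_exp.mpr hkθ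
  unfold samplingP
  exact ⟨div_nonneg (by linarith) (by linarith), div_le_one_of_le₀ (by linarith) (by linarith)⟩

/-- The sampling error is at most `S (S + 1/4)`, where `S` counts the records with budget below
the threshold. -/
lemma errS_le {m : ℕ} {ε : Fin m → ℝ} (nn : Fin m → ℕ) (hpos : ∀ j, 0 < ε j) (θ : ℝ) :
    errS ε nn θ ≤ (∑ k, if ε k < θ then (nn k : ℝ) else 0)
      * ((∑ k, if ε k < θ then (nn k : ℝ) else 0) + 1 / 4) := by
  have hvar : (∑ k, if ε k < θ then (nn k : ℝ) * samplingP ε k θ * (1 - samplingP ε k θ) else 0)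
      ≤ (∑ k, if ε k < θ then (nn k : ℝ) else 0) * (1 / 4) := by
    rw [Finset.sum_mul]
    refine Finset.sum_le_sum fun k _ => ?_
    split_ifs
    · have hn : (0 : ℝ) ≤ nn k := Nat.cast_nonneg _
      nlinarith [mul_nonneg hn (sq_nonneg (samplingP ε k θ - 1 / 2))]
    · simp
  have hbias_nonneg : 0 ≤ ∑ k, if ε k < θ then (nn k : ℝ) * (1 - samplingP ε k θ) else 0 := by
    refine Finset.sum_nonneg fun k _ => ?_
    split_ifs with h
    · exact mul_nonneg (Nat.cast_nonneg _) (sub_nonneg.mpr (samplingP_mem_Icc (hpos k) h).2)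
    · exact le_rfl
  have hbias_le : (∑ k, if ε k < θ then (nn k : ℝ) * (1 - samplingP ε k θ) else 0)
      ≤ ∑ k, if ε k < θ then (nn k : ℝ) else 0 := by
    refine Finset.sum_le_sum fun k _ => ?_
    split_ifs with h
    · exact mul_le_of_le_one_right (Nat.cast_nonneg _)
        (sub_le_self _ (samplingP_mem_Icc (hpos k) h).1)
    · exact le_rfl
  have hsq := pow_le_pow_left₀ hbias_nonneg hbias_le 2
  unfold errS
  linarith

/-- At the smallest budget every record is kept, so the sampling error vanishes. -/
lemma errS_firstIdx {m : ℕ} (hm : 0 < m) {ε : Fin m → ℝ} (nn : Fin m → ℕ)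
    (hmono : StrictMono ε) : errS ε nn (ε (firstIdx hm)) = 0 := by
  have h (k : Fin m) : ¬ ε k < ε (firstIdx hm) :=
    not_lt.mpr (hmono.monotone (Fin.mk_le_of_le_val (Nat.zero_le _)))
  simp [errS, h]

/-- The number of records with budget below the largest one is `n - n_m`. -/
lemma sum_lt_lastIdx {m : ℕ} (hm : 0 < m) {ε : Fin m → ℝ} (nn : Fin m → ℕ)
    (hmono : StrictMono ε) :
    (∑ k, if ε k < ε (lastIdx hm) then (nn k : ℝ) else 0)
      = (∑ j, (nn j : ℝ)) - nn (lastIdx hm) := by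
  have h (k : Fin m) : ε k < ε (lastIdx hm) ↔ k ≠ lastIdx hm := by
    rw [hmono.lt_iff_lt]
    simp only [lastIdx, Fin.lt_def, ne_eq, Fin.ext_iff]
    omega
  simp only [h]
  rw [eq_sub_iff_add_eq, ← Finset.sum_filter, Finset.filter_ne',
    Finset.sum_erase_add _ _ (Finset.mem_univ _)]

/-- Lemma 1: the OBS error with sensitivity I is at most
min(2I²/ε_1², Z + 2I²/ε_m²). -/
theorem obs_error_bound (m : ℕ) (hm : 0 < m) (ε : Fin m → ℝ) (nn : Fin m → ℕ)
    (hpos : ∀ j, 0 < ε j) (hmono : StrictMono ε) (hcount : ∀ j, 0 < nn j)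
    (I : ℝ) (hI : 0 < I) :
    errO hm ε nn I ≤
      min (2 * I ^ 2 / (ε (firstIdx hm)) ^ 2)
        (Zval hm nn + 2 * I ^ 2 / (ε (lastIdx hm)) ^ 2) := by
  have hle (j : Fin m) : errO hm ε nn I ≤ errTot ε nn I (ε j) :=
    Finset.inf'_le _ (Finset.mem_univ j)
  refine le_min ((hle (firstIdx hm)).trans_eq ?_) ((hle (lastIdx hm)).trans ?_)
  · rw [errTot, errS_firstIdx hm nn hmono, zero_add, errDP]
  · have h := errS_le nn hpos (ε (lastIdx hm))
    rw [sum_lt_lastIdx hm nn hmono] at h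
    exact add_le_add_left h _
end

section
/- Let ε > 0 be a real number, w ≥ 1 an integer, and (a_t)_{t ≥ 1} a sequence of nonnegative reals such that for every t ≥ 1, a_t ≤ (ε/2 − Σ_{k = max(t−w+1, 1)}^{t−1} a_k)/2. Define the total per-slot budget usage c_t = ε/(2w) + a_t for every t ≥ 1. Then for every t ≥ 1, Σ_{k = max(t−w+1, 1)}^{t} c_k ≤ ε. (Budget feasibility in Theorem 1 for Personalized Budget Distribution: the dissimilarity-calculation part uses a constant budget ε/(2w) per slot, the publication part uses at most half of its remaining window budget per slot, and together the total budget spent in any window of length w is at most ε.) -/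
/-- Budget feasibility for Personalized Budget Distribution: with the constant
dissimilarity-calculation budget ε/(2w) per slot added to the publication budgets,
the total budget spent in any window of length w is at most ε. -/
theorem pbd_total_budget_feasibility (ε : ℝ) (hε : 0 < ε) (w : ℕ) (hw : 1 ≤ w) (a : ℕ → ℝ)
    (ha0 : ∀ t, 1 ≤ t → 0 ≤ a t)
    (ha : ∀ t, 1 ≤ t →
      a t ≤ (ε / 2 - ∑ k ∈ Finset.Icc (max (t - w + 1) 1) (t - 1), a k) / 2)
    (c : ℕ → ℝ) (hc : ∀ t, 1 ≤ t → c t = ε / (2 * (w : ℝ)) + a t) :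
    ∀ t, 1 ≤ t → ∑ k ∈ Finset.Icc (max (t - w + 1) 1) t, c k ≤ ε := by
  intro t ht
  set m := max (t - w + 1) 1 with hm
  have hm1 : 1 ≤ m := le_max_right _ _
  have hmt : m ≤ t := by omega
  have hpub : ∑ k ∈ Finset.Icc m t, a k ≤ ε / 2 := by
    have hsplit : ∑ k ∈ Finset.Icc m t, a k = ∑ k ∈ Finset.Icc m (t - 1), a k + a t := by
      obtain ⟨s, rfl⟩ : ∃ s, t = s + 1 := ⟨t - 1, by omega⟩
      rw [Finset.sum_Icc_succ_top hmt, Nat.add_sub_cancel]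
    linarith [ha t ht, ha0 t ht]
  have hdis : ((Finset.Icc m t).card : ℝ) * (ε / (2 * (w : ℝ))) ≤ ε / 2 := by
    have hw0 : (0 : ℝ) < w := by exact_mod_cast hw
    have hcard : (Finset.Icc m t).card ≤ w := by
      rw [Nat.card_Icc]
      omega
    calc ((Finset.Icc m t).card : ℝ) * (ε / (2 * (w : ℝ)))
        ≤ (w : ℝ) * (ε / (2 * (w : ℝ))) := by gcongr
      _ = ε / 2 := by field_simp
  calc ∑ k ∈ Finset.Icc m t, c k
      = ∑ k ∈ Finset.Icc m t, (ε / (2 * (w : ℝ)) + a k) :=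
        Finset.sum_congr rfl fun k hk => hc k (hm1.trans (Finset.mem_Icc.mp hk).1)
    _ = (Finset.Icc m t).card * (ε / (2 * (w : ℝ))) + ∑ k ∈ Finset.Icc m t, a k := by
        rw [Finset.sum_add_distrib, Finset.sum_const, nsmul_eq_mul]
    _ ≤ ε := by linarith
end
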